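/- arXiv:2605.02145 — 2 statements merged into one kernel-verified Lean document; each statement's English description precedes it below -/
import Mathlib

section
/- For the quintic Hamiltonian H(x,y) = y²/2 − x⁴/4 + x⁵/5, the Abelian integrals along a closed level curve at level h satisfy the two identities: I_{0,3} = (30/17)·h·I_{0,1} + (3/34)·I_{3,1}, and I_{1,3} = (15/323)·h·I_{0,1} + (30/19)·h·I_{1,1} + (105/1292)·I_{3,1}. -/
/-!
On a level curve of `y² / 2 + F(x)` one has `y² = 2 (h - F(x))`, so `∮ p(x) y ^ (m + 2) dx` can be
lowered to `∮ 2 p(x) (h - F(x)) y ^ m dx`. On the other hand `y dy = -F'(x) dx`, so integrating the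
exact form `d(G(x) y ^ (m + 2))` gives `∮ G'(x) y ^ (m + 2) dx = (m + 2) ∮ G(x) F'(x) y ^ m dx`.
Lowering `p - G'` by the first rule and `G'` by the second leaves the polynomial `G` free; for
`m = 1` and the quintic `F`, a suitable `G` cancels every monomial of degree above `3`.
-/

open Polynomial Set Topology MeasureTheory

section Calculus

variable {𝕜 : Type*} [NontriviallyNormedField 𝕜] {f g u y : 𝕜 → 𝕜} {v t : 𝕜}

theorem hasDerivAt_of_eventually_sub_eq_sub_mul (hu : HasDerivAt u v t) (hg : ContinuousAt g t)
    (hf : ∀ᶠ s in 𝓝 t, f s - f t = (u s - u t) * g s) : HasDerivAt f (v * g t) t := by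
  rw [hasDerivAt_iff_tendsto_slope] at hu ⊢
  refine (hu.mul (hg.tendsto.mono_left nhdsWithin_le_nhds)).congr' ?_
  filter_upwards [hf.filter_mono nhdsWithin_le_nhds] with s hs
  rw [slope_def_field, slope_def_field, hs, div_mul_eq_mul_div]

theorem hasDerivAt_of_sq [NeZero (2 : 𝕜)] (hy : ContinuousAt y t) (hyt : y t ≠ 0)
    (hsq : HasDerivAt (fun s ↦ y s ^ 2) v t) : HasDerivAt y (v / (2 * y t)) t := by
  have hsum : y t + y t ≠ 0 := by simpa only [← two_mul] using mul_ne_zero two_ne_zero hyt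
  have hcont : ContinuousAt (fun s ↦ y s + y t) t := hy.add continuousAt_const
  rw [div_eq_mul_inv, two_mul]
  refine hasDerivAt_of_eventually_sub_eq_sub_mul hsq (hcont.inv₀ hsum) ?_
  filter_upwards [hcont.eventually_ne hsum] with s hs
  rw [sq_sub_sq, mul_comm (y s + y t), Pi.inv_apply, mul_inv_cancel_right₀ hs]

-- Where `y` vanishes it need not be differentiable, but `y ^ (m + 2) = y ^ 2 * y ^ m` still is.
theorem hasDerivAt_pow_add_two_of_sq [NeZero (2 : 𝕜)] (hy : ContinuousAt y t)
    (hsq : HasDerivAt (fun s ↦ y s ^ 2) v t) (m : ℕ) :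
    HasDerivAt (fun s ↦ y s ^ (m + 2)) ((m + 2) / 2 * v * y t ^ m) t := by
  by_cases hyt : y t = 0
  · have hderiv := hasDerivAt_of_eventually_sub_eq_sub_mul (f := fun s ↦ y s ^ (m + 2)) hsq
      (hy.pow m) (.of_forall fun s ↦ by simp [hyt, pow_add, mul_comm])
    refine hderiv.congr_deriv ?_
    rcases m.eq_zero_or_pos with rfl | hm
    · simp [div_self (two_ne_zero' 𝕜)]
    · simp [hyt, hm.ne']
  · refine ((hasDerivAt_of_sq hy hyt hsq).pow (m + 2)).congr_deriv ?_
    push_cast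
    field_simp
    ring

end Calculus

/-- The Abelian integral `∮ p(x) y ^ m dx` along the plane curve `(x, y)` parametrized by
`[a, b]`. -/
noncomputable def abelianIntegral (x y : ℝ → ℝ) (a b : ℝ) (p : ℝ[X]) (m : ℕ) : ℝ :=
  ∫ t in a..b, p.eval (x t) * y t ^ m * deriv x t

/-- The plane curves `(x, y)` on `[a, b]` along which polynomial forms `p(x, y) dx` are integrated.
Only continuity is asked of `y`, since `dy` does not occur in such forms. -/
structure IsAdmissibleCurve (x y : ℝ → ℝ) (a b : ℝ) : Prop where
  continuousOn_fst : ContinuousOn x (uIcc a b)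
  continuousOn_snd : ContinuousOn y (uIcc a b)
  differentiableAt_fst : ∀ t ∈ uIoo a b, DifferentiableAt ℝ x t
  intervalIntegrable_deriv_fst : IntervalIntegrable (deriv x) volume a b

section AbelianIntegral

variable {x y : ℝ → ℝ} {a b h : ℝ} {F : ℝ[X]}

namespace IsAdmissibleCurve

theorem of_contDiff (hx : ContDiff ℝ 1 x) (hy : Continuous y) : IsAdmissibleCurve x y a b where
  continuousOn_fst := hx.continuous.continuousOn
  continuousOn_snd := hy.continuousOn
  differentiableAt_fst t _ := hx.differentiable one_ne_zero t
  intervalIntegrable_deriv_fst := (hx.continuous_deriv le_rfl).intervalIntegrable a b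

theorem continuousOn_eval_mul_pow (hγ : IsAdmissibleCurve x y a b) (p : ℝ[X]) (m : ℕ) :
    ContinuousOn (fun t ↦ p.eval (x t) * y t ^ m) (uIcc a b) :=
  (p.continuous.comp_continuousOn hγ.continuousOn_fst).mul (hγ.continuousOn_snd.pow m)

theorem intervalIntegrable_eval_mul_pow_mul_deriv (hγ : IsAdmissibleCurve x y a b) (p : ℝ[X])
    (m : ℕ) :
    IntervalIntegrable (fun t ↦ p.eval (x t) * y t ^ m * deriv x t) volume a b :=
  hγ.intervalIntegrable_deriv_fst.continuousOn_mul (hγ.continuousOn_eval_mul_pow p m)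

theorem abelianIntegral_add (hγ : IsAdmissibleCurve x y a b) (p q : ℝ[X]) (m : ℕ) :
    abelianIntegral x y a b (p + q) m =
      abelianIntegral x y a b p m + abelianIntegral x y a b q m := by
  simp only [abelianIntegral, eval_add, add_mul]
  exact intervalIntegral.integral_add (hγ.intervalIntegrable_eval_mul_pow_mul_deriv p m)
    (hγ.intervalIntegrable_eval_mul_pow_mul_deriv q m)

end IsAdmissibleCurve

theorem abelianIntegral_C_mul (c : ℝ) (p : ℝ[X]) (m : ℕ) :
    abelianIntegral x y a b (C c * p) m = c * abelianIntegral x y a b p m := by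
  simp only [abelianIntegral, eval_mul, eval_C, mul_assoc, intervalIntegral.integral_const_mul]

theorem abelianIntegral_add_two (hlevel : ∀ t ∈ uIcc a b, y t ^ 2 / 2 + F.eval (x t) = h)
    (p : ℝ[X]) (m : ℕ) :
    abelianIntegral x y a b p (m + 2) = abelianIntegral x y a b (2 * p * (C h - F)) m := by
  refine intervalIntegral.integral_congr fun t ht ↦ ?_
  simp only [eval_mul, eval_sub, eval_C, eval_ofNat, ← hlevel t ht]
  ring

namespace IsAdmissibleCurve

theorem hasDerivAt_snd_sq (hγ : IsAdmissibleCurve x y a b)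
    (hlevel : ∀ t ∈ uIcc a b, y t ^ 2 / 2 + F.eval (x t) = h) {t : ℝ} (ht : t ∈ uIoo a b) :
    HasDerivAt (fun s ↦ y s ^ 2) (-2 * (F.derivative.eval (x t) * deriv x t)) t := by
  have hF : HasDerivAt (fun s ↦ F.eval (x s)) (F.derivative.eval (x t) * deriv x t) t :=
    (F.hasDerivAt (x t)).comp t (hγ.differentiableAt_fst t ht).hasDerivAt
  refine ((hF.const_sub h).const_mul 2).congr_of_eventuallyEq ?_ |>.congr_deriv (by ring)
  filter_upwards [Ioo_mem_nhds ht.1 ht.2] with s hs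
  linear_combination 2 * hlevel s (Ioo_subset_Icc_self hs)

theorem abelianIntegral_derivative_add_two (hγ : IsAdmissibleCurve x y a b) (hx : x a = x b)
    (hy : y a = y b) (hlevel : ∀ t ∈ uIcc a b, y t ^ 2 / 2 + F.eval (x t) = h)
    (G : ℝ[X]) (m : ℕ) :
    abelianIntegral x y a b G.derivative (m + 2) =
      abelianIntegral x y a b (C (m + 2 : ℝ) * (G * F.derivative)) m := by
  have hderiv : ∀ t ∈ uIoo a b, HasDerivAt (fun s ↦ G.eval (x s) * y s ^ (m + 2))
      (G.derivative.eval (x t) * y t ^ (m + 2) * deriv x t -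
        (C (m + 2 : ℝ) * (G * F.derivative)).eval (x t) * y t ^ m * deriv x t) t := by
    intro t ht
    have hcont : ContinuousAt y t := hγ.continuousOn_snd.continuousAt (Icc_mem_nhds ht.1 ht.2)
    have hG : HasDerivAt (fun s ↦ G.eval (x s)) (G.derivative.eval (x t) * deriv x t) t :=
      (G.hasDerivAt (x t)).comp t (hγ.differentiableAt_fst t ht).hasDerivAt
    have hpow := hasDerivAt_pow_add_two_of_sq hcont (hγ.hasDerivAt_snd_sq hlevel ht) m
    refine (hG.mul hpow).congr_deriv ?_
    simp only [eval_mul, eval_C]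
    ring
  have hleft := hγ.intervalIntegrable_eval_mul_pow_mul_deriv G.derivative (m + 2)
  have hright := hγ.intervalIntegrable_eval_mul_pow_mul_deriv (C (m + 2 : ℝ) * (G * F.derivative)) m
  have hexact := intervalIntegral.integral_eq_sub_of_hasDeriv_right
    (hγ.continuousOn_eval_mul_pow G (m + 2)) (fun t ht ↦ (hderiv t ht).hasDerivWithinAt)
    (hleft.sub hright)
  rwa [intervalIntegral.integral_sub hleft hright, hx, hy, sub_self, sub_eq_zero] at hexact

theorem abelianIntegral_add_two_sub_derivative (hγ : IsAdmissibleCurve x y a b) (hx : x a = x b)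
    (hy : y a = y b) (hlevel : ∀ t ∈ uIcc a b, y t ^ 2 / 2 + F.eval (x t) = h)
    (p G : ℝ[X]) (m : ℕ) :
    abelianIntegral x y a b p (m + 2) = abelianIntegral x y a b
      (2 * (p - G.derivative) * (C h - F) + C (m + 2 : ℝ) * (G * F.derivative)) m := by
  calc abelianIntegral x y a b p (m + 2)
      = abelianIntegral x y a b (p - G.derivative) (m + 2) +
          abelianIntegral x y a b G.derivative (m + 2) := by
        rw [← hγ.abelianIntegral_add, sub_add_cancel]
    _ = _ := by
        rw [abelianIntegral_add_two hlevel, hγ.abelianIntegral_derivative_add_two hx hy hlevel,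
          hγ.abelianIntegral_add]

end IsAdmissibleCurve

end AbelianIntegral

theorem quintic_cubic_identities_general {x y : ℝ → ℝ} {a b h : ℝ}
    (hγ : IsAdmissibleCurve x y a b) (hx : x a = x b) (hy : y a = y b)
    (hlevel : ∀ t ∈ uIcc a b, y t ^ 2 / 2 - x t ^ 4 / 4 + x t ^ 5 / 5 = h)
    (I : ℕ → ℕ → ℝ) (hI : ∀ i j, I i j = abelianIntegral x y a b (X ^ i) j) :
    I 0 3 = (30 / 17) * h * I 0 1 + (3 / 34) * I 3 1 ∧
      I 1 3 = (15 / 323) * h * I 0 1 + (30 / 19) * h * I 1 1 + (105 / 1292) * I 3 1 := by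
  let F : ℝ[X] := C (1 / 5) * X ^ 5 - C (1 / 4) * X ^ 4
  have hF : ∀ t ∈ uIcc a b, y t ^ 2 / 2 + F.eval (x t) = h := fun t ht ↦ by
    simp only [F, eval_sub, eval_mul, eval_C, eval_pow, eval_X, ← hlevel t ht]
    ring
  simp only [hI, ← abelianIntegral_C_mul, ← hγ.abelianIntegral_add]
  -- The coefficients of `G` solve the linear system that matching powers of `x` imposes.
  constructor
  · rw [hγ.abelianIntegral_add_two_sub_derivative hx hy hF _ (C (2 / 17) * X - C (1 / 34)) 1]
    congr 1
    refine funext fun r ↦ ?_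
    simp only [F, derivative_sub, derivative_C_mul, derivative_C, derivative_X, derivative_X_pow,
      eval_add, eval_sub, eval_mul, eval_pow, eval_X, eval_C, eval_ofNat, eval_zero, eval_one]
    ring
  · rw [hγ.abelianIntegral_add_two_sub_derivative hx hy hF _
      (C (2 / 19) * X ^ 2 - C (15 / 646) * X - C (35 / 1292)) 1]
    congr 1
    refine funext fun r ↦ ?_
    simp only [F, derivative_sub, derivative_C_mul, derivative_C, derivative_X, derivative_X_pow,
      eval_add, eval_sub, eval_mul, eval_pow, eval_X, eval_C, eval_ofNat, eval_zero, eval_one]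
    ring

/-- For the quintic Hamiltonian `H(x,y) = y²/2 − x⁴/4 + x⁵/5`, the Abelian integrals along
a closed level curve at level `h` satisfy
`I_{0,3} = (30/17)·h·I_{0,1} + (3/34)·I_{3,1}` and
`I_{1,3} = (15/323)·h·I_{0,1} + (30/19)·h·I_{1,1} + (105/1292)·I_{3,1}`. -/
theorem quintic_cubic_identities
    (H : ℝ → ℝ → ℝ) (hH : ∀ x y, H x y = y ^ 2 / 2 - x ^ 4 / 4 + x ^ 5 / 5)
    (h : ℝ) (γ₁ γ₂ : ℝ → ℝ)
    (hγ₁ : ContDiff ℝ 1 γ₁) (hγ₂ : ContDiff ℝ 1 γ₂)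
    (hclosed₁ : γ₁ 0 = γ₁ 1) (hclosed₂ : γ₂ 0 = γ₂ 1)
    (hlevel : ∀ t ∈ Set.Icc (0:ℝ) 1, H (γ₁ t) (γ₂ t) = h)
    (I : ℕ → ℕ → ℝ)
    (hI : ∀ i j, I i j = ∫ t in (0:ℝ)..1, γ₁ t ^ i * γ₂ t ^ j * deriv γ₁ t) :
    I 0 3 = (30 / 17) * h * I 0 1 + (3 / 34) * I 3 1 ∧
      I 1 3 = (15 / 323) * h * I 0 1 + (30 / 19) * h * I 1 1 + (105 / 1292) * I 3 1 := by
  refine quintic_cubic_identities_general (.of_contDiff hγ₁ hγ₂.continuous) hclosed₁ hclosed₂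
    (fun t ht ↦ ?_) I fun i j ↦ by simp only [hI, abelianIntegral, eval_pow, eval_X]
  rw [← hH, hlevel t (uIcc_of_le (zero_le_one' ℝ) ▸ ht)]
end

section
/- The column vector X(h) = (I_{0,1}(h), I_{1,1}(h), I_{2,1}(h), I_{3,1}(h))ᵀ is differentiable on (−1/20, 0) and satisfies the Picard–Fuchs system 20·h·(20·h + 1)·X′(h) = (A₀ + A₁·h)·X(h) for all h ∈ (−1/20, 0), where A₀ is the 4×4 matrix with rows (15, 2, 3, −26), (0, 20, 3, −26), (0, 0, 25, −26), (0, 0, 0, 0), and A₁ is the 4×4 matrix with rows (280, 0, 0, 0), (−20, 360, 0, 0), (−20, −40, 440, 0), (−20, −40, −60, 520). -/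
/-!
Write `I i n h` for the integral of `x ^ i * y ^ n` over the upper half of the oval. Since
`d(y²)/dh = 2` and `y dy = -F' dx`, the `h`-derivative of `I i (n + 2)` is `(n + 2) * I i n`, and
integration by parts expresses `I (i + 4) n - I (i + 3) n` through `I (i - 1) (n + 2)`. Combined
with `y² = 2 (h - F)`, this writes `I i n` in terms of the integrals `I j (n + 2)` and of `I 3 n`;
differentiating that relation eliminates the exponent `n + 2` and leaves the Picard–Fuchs system.

To avoid differentiating an integral with moving endpoints, the oval is enclosed in the fixed
interval `[0, 5/4]`: outside the oval `h ≤ F x`, so the real square root defining `y` is zero there.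
-/

open Set Filter MeasureTheory

theorem hasDerivAt_sqrt_pow_add_two {n : ℕ} (hn : n ≠ 0) (s : ℝ) :
    HasDerivAt (fun t : ℝ => √t ^ (n + 2)) ((n + 2) / 2 * √s ^ n) s := by
  have of_ne_zero : ∀ t : ℝ, t ≠ 0 →
      HasDerivAt (fun t : ℝ => √t ^ (n + 2)) ((n + 2) / 2 * √t ^ n) t := by
    intro t ht
    rcases ht.lt_or_gt with hneg | hpos
    · rw [Real.sqrt_eq_zero_of_nonpos hneg.le, zero_pow hn, mul_zero]
      refine (hasDerivAt_const t (0 : ℝ)).congr_of_eventuallyEq ?_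
      filter_upwards [Iio_mem_nhds hneg] with u hu
      rw [Real.sqrt_eq_zero_of_nonpos (le_of_lt hu), zero_pow (by lia)]
    · refine ((Real.hasDerivAt_sqrt hpos.ne').pow (n + 2)).congr_deriv ?_
      have := (Real.sqrt_pos.2 hpos).ne'
      push_cast
      field_simp
      exact pow_succ' _ _
  rcases eq_or_ne s 0 with rfl | hs
  · exact hasDerivAt_of_hasDerivAt_of_ne of_ne_zero (by fun_prop) (by fun_prop)
  · exact of_ne_zero s hs

/-- The upper branch `y = √(2 (h - F x))` of the level curve `y² / 2 + F x = h`. By the convention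
for `Real.sqrt` it is extended by zero to the points where `h < F x`. -/
noncomputable def upperBranch (F : ℝ → ℝ) (h x : ℝ) : ℝ :=
  √(2 * (h - F x))

section UpperBranch

variable {F F' φ φ' : ℝ → ℝ} {a b c d h x : ℝ} {n : ℕ}

theorem upperBranch_eq_zero (hx : h ≤ F x) : upperBranch F h x = 0 :=
  Real.sqrt_eq_zero_of_nonpos (by linarith)

theorem upperBranch_nonneg : 0 ≤ upperBranch F h x :=
  Real.sqrt_nonneg _

theorem upperBranch_mono (x : ℝ) : Monotone fun h => upperBranch F h x :=
  fun _ _ hle => Real.sqrt_le_sqrt (by linarith)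

theorem upperBranch_pow_add_two (hn : n ≠ 0) (F : ℝ → ℝ) (h x : ℝ) :
    upperBranch F h x ^ (n + 2) = 2 * (h - F x) * upperBranch F h x ^ n := by
  rcases le_total h (F x) with hle | hle
  · rw [upperBranch_eq_zero hle, zero_pow hn, zero_pow (by lia), mul_zero]
  · rw [pow_add, upperBranch, Real.sq_sqrt (by linarith), mul_comm]

theorem continuousOn_upperBranch {s : Set ℝ} (hF : ContinuousOn F s) (h : ℝ) :
    ContinuousOn (upperBranch F h) s :=
  (continuousOn_const.mul (continuousOn_const.sub hF)).sqrt

theorem hasDerivAt_upperBranch_pow_energy (hn : n ≠ 0) (F : ℝ → ℝ) (h x : ℝ) :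
    HasDerivAt (fun t => upperBranch F t x ^ (n + 2)) ((n + 2) * upperBranch F h x ^ n) h := by
  have inner : HasDerivAt (fun t => 2 * (t - F x)) 2 h := by
    simpa using ((hasDerivAt_id h).sub_const (F x)).const_mul 2
  refine ((hasDerivAt_sqrt_pow_add_two hn _).comp h inner).congr_deriv ?_
  rw [upperBranch]
  ring

theorem hasDerivAt_upperBranch_pow {m : ℝ} (hF : HasDerivAt F m x) (hn : n ≠ 0) (h : ℝ) :
    HasDerivAt (fun t => upperBranch F h t ^ (n + 2))
      (-(n + 2) * (m * upperBranch F h x ^ n)) x := by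
  refine ((hasDerivAt_sqrt_pow_add_two hn _).comp x
    ((hF.const_sub h).const_mul 2)).congr_deriv ?_
  rw [upperBranch]
  ring

theorem intervalIntegrable_mul_upperBranch_pow (hφ : IntervalIntegrable φ volume a b)
    (hF : ContinuousOn F (uIcc a b)) (h : ℝ) (n : ℕ) :
    IntervalIntegrable (fun x => φ x * upperBranch F h x ^ n) volume a b :=
  hφ.mul_continuousOn ((continuousOn_upperBranch hF h).pow n)

theorem hasDerivAt_integral_mul_upperBranch_pow (hF : ContinuousOn F (uIcc a b))
    (hφ : IntervalIntegrable φ volume a b) (hn : n ≠ 0) (h : ℝ) :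
    HasDerivAt (fun t => ∫ x in a..b, φ x * upperBranch F t x ^ (n + 2))
      ((n + 2) * ∫ x in a..b, φ x * upperBranch F h x ^ n) h := by
  have integrable t m := intervalIntegrable_mul_upperBranch_pow hφ hF t m
  rw [← intervalIntegral.integral_const_mul]
  refine (intervalIntegral.hasDerivAt_integral_of_dominated_loc_of_deriv_le
    (F' := fun t x => (n + 2) * (φ x * upperBranch F t x ^ n))
    (bound := fun x => ‖(n + 2) * (φ x * upperBranch F (h + 1) x ^ n)‖)
    (Iio_mem_nhds (lt_add_one h))
    (Eventually.of_forall fun t => (integrable t _).def'.aestronglyMeasurable)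
    (integrable h _) ((integrable h n).const_mul _).def'.aestronglyMeasurable
    (Eventually.of_forall fun x _ t ht => ?_) ((integrable (h + 1) n).const_mul _).norm
    (Eventually.of_forall fun x _ t _ => ?_)).2
  · have := upperBranch_mono (F := F) x (le_of_lt (mem_Iio.1 ht))
    simp only [norm_mul, norm_pow, Real.norm_of_nonneg upperBranch_nonneg]
    gcongr
    exact upperBranch_nonneg
  · refine ((hasDerivAt_upperBranch_pow_energy hn F t x).const_mul (φ x)).congr_deriv ?_
    ring

theorem integral_deriv_mul_upperBranch_pow
    (hφ : ∀ x ∈ uIcc a b, HasDerivAt φ (φ' x) x) (hF : ∀ x ∈ uIcc a b, HasDerivAt F (F' x) x)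
    (hφ' : IntervalIntegrable φ' volume a b) (hF' : IntervalIntegrable F' volume a b)
    (ha : h ≤ F a) (hb : h ≤ F b) (hn : n ≠ 0) :
    ∫ x in a..b, φ' x * upperBranch F h x ^ (n + 2) =
      (n + 2) * ∫ x in a..b, φ x * (F' x * upperBranch F h x ^ n) := by
  have hFc : ContinuousOn F (uIcc a b) := fun x hx => (hF x hx).continuousAt.continuousWithinAt
  have parts := intervalIntegral.integral_mul_deriv_eq_deriv_mul hφ
    (fun x hx => hasDerivAt_upperBranch_pow (hF x hx) hn h) hφ'
    ((intervalIntegrable_mul_upperBranch_pow hF' hFc h n).const_mul _)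
  simp only [mul_left_comm (φ _), intervalIntegral.integral_const_mul, upperBranch_eq_zero ha,
    upperBranch_eq_zero hb, zero_pow (Nat.succ_ne_zero (n + 1)), mul_zero] at parts
  simp only [mul_left_comm (φ _)]
  linarith

theorem integral_mul_upperBranch_pow_eq_of_le (hac : a ≤ c) (hcd : c ≤ d) (hdb : d ≤ b)
    (hc : ∀ x ∈ Icc a c, h ≤ F x) (hd : ∀ x ∈ Icc d b, h ≤ F x) (hn : n ≠ 0) (φ : ℝ → ℝ) :
    ∫ x in c..d, φ x * upperBranch F h x ^ n = ∫ x in a..b, φ x * upperBranch F h x ^ n := by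
  rw [intervalIntegral.integral_of_le hcd, intervalIntegral.integral_of_le (by linarith)]
  refine (setIntegral_eq_of_subset_of_forall_sdiff_eq_zero measurableSet_Ioc
    (Ioc_subset_Ioc hac hdb) fun x hx => ?_).symm
  have hle : h ≤ F x := by
    rcases le_or_gt x c with hxc | hxc
    · exact hc x ⟨hx.1.1.le, hxc⟩
    · exact hd x ⟨(not_le.1 fun hxd => hx.2 ⟨hxc, hxd⟩).le, hx.1.2⟩
  rw [upperBranch_eq_zero hle, zero_pow hn, mul_zero]

end UpperBranch

/-- The potential `F` of the quintic Hamiltonian `y² / 2 + F x`. -/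
noncomputable def quinticPotential (x : ℝ) : ℝ :=
  -x ^ 4 / 4 + x ^ 5 / 5

theorem hasDerivAt_quinticPotential (x : ℝ) :
    HasDerivAt quinticPotential (x ^ 4 - x ^ 3) x := by
  refine (((hasDerivAt_pow 4 x).neg.div_const 4).add
    ((hasDerivAt_pow 5 x).div_const 5)).congr_deriv ?_
  push_cast
  ring

theorem continuous_quinticPotential : Continuous quinticPotential :=
  continuous_iff_continuousAt.2 fun x => (hasDerivAt_quinticPotential x).continuousAt

theorem antitoneOn_quinticPotential : AntitoneOn quinticPotential (Icc 0 1) := by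
  refine antitoneOn_of_hasDerivWithinAt_nonpos (convex_Icc _ _)
    continuous_quinticPotential.continuousOn
    (fun x _ => (hasDerivAt_quinticPotential x).hasDerivWithinAt) fun x hx => ?_
  rw [interior_Icc] at hx
  exact sub_nonpos.2 (pow_le_pow_of_le_one hx.1.le hx.2.le (by norm_num))

theorem monotoneOn_quinticPotential : MonotoneOn quinticPotential (Ici 1) := by
  refine monotoneOn_of_hasDerivWithinAt_nonneg (convex_Ici _)
    continuous_quinticPotential.continuousOn
    (fun x _ => (hasDerivAt_quinticPotential x).hasDerivWithinAt) fun x hx => ?_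
  rw [interior_Ici, mem_Ioi] at hx
  exact sub_nonneg.2 (pow_le_pow_right₀ hx.le (by norm_num))

/-- The integral of `x ^ i * y ^ n` over the upper branch of the oval of energy `h`, which for odd
`n` is half of the Abelian integral `∮ x ^ i * y ^ n dx`. For `n ≠ 0` and `h ≤ 0` the interval
`[0, 5 / 4]` between the zeros of the potential may replace the projection of the oval, since
`upperBranch` vanishes on the difference. -/
noncomputable def quinticIntegral (i n : ℕ) (h : ℝ) : ℝ :=
  ∫ x in (0 : ℝ)..5 / 4, x ^ i * upperBranch quinticPotential h x ^ n

section QuinticIntegral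

variable {h : ℝ} {n : ℕ}

theorem integral_oval_eq_quinticIntegral {c d : ℝ} (hc : c ∈ Icc (0 : ℝ) 1)
    (hd : d ∈ Icc (1 : ℝ) (5 / 4)) (hFc : quinticPotential c = h) (hFd : quinticPotential d = h)
    (hn : n ≠ 0) (i : ℕ) :
    ∫ x in c..d, x ^ i * upperBranch quinticPotential h x ^ n = quinticIntegral i n h := by
  refine integral_mul_upperBranch_pow_eq_of_le hc.1 (hc.2.trans hd.1) hd.2
    (fun x hx => ?_) (fun x hx => ?_) hn _
  · exact hFc.symm.trans_le (antitoneOn_quinticPotential ⟨hx.1, hx.2.trans hc.2⟩ hc hx.2)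
  · exact hFd.symm.trans_le (monotoneOn_quinticPotential hd.1 (hd.1.trans hx.1) hx.1)

theorem intervalIntegrable_pow_mul_upperBranch_quintic (a b : ℝ) (i n : ℕ) (h : ℝ) :
    IntervalIntegrable (fun x => x ^ i * upperBranch quinticPotential h x ^ n) volume a b :=
  intervalIntegrable_mul_upperBranch_pow (intervalIntegral.intervalIntegrable_pow i)
    continuous_quinticPotential.continuousOn h n

theorem hasDerivAt_quinticIntegral_exponent_add_two (hn : n ≠ 0) (i : ℕ) (h : ℝ) :
    HasDerivAt (quinticIntegral i (n + 2)) ((n + 2) * quinticIntegral i n h) h :=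
  hasDerivAt_integral_mul_upperBranch_pow continuous_quinticPotential.continuousOn
    (intervalIntegral.intervalIntegrable_pow i) hn h

theorem quinticIntegral_by_parts (hn : n ≠ 0) (hh : h ≤ 0) (i : ℕ) :
    i * quinticIntegral (i - 1) (n + 2) h =
      (n + 2) * (quinticIntegral (i + 4) n h - quinticIntegral (i + 3) n h) := by
  have parts := integral_deriv_mul_upperBranch_pow (h := h) (a := 0) (b := 5 / 4)
    (fun x _ => hasDerivAt_pow i x) (fun x _ => hasDerivAt_quinticPotential x)
    (Continuous.intervalIntegrable (by fun_prop) _ _)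
    (Continuous.intervalIntegrable (by fun_prop) _ _)
    (by norm_num [quinticPotential, hh]) (by norm_num [quinticPotential, hh]) hn
  simp only [mul_assoc, intervalIntegral.integral_const_mul] at parts
  rw [quinticIntegral, parts, quinticIntegral, quinticIntegral, ← intervalIntegral.integral_sub
    (intervalIntegrable_pow_mul_upperBranch_quintic _ _ _ _ _)
    (intervalIntegrable_pow_mul_upperBranch_quintic _ _ _ _ _)]
  congr 1
  refine intervalIntegral.integral_congr fun x _ => ?_
  ring

theorem quinticIntegral_exponent_add_two (hn : n ≠ 0) (i : ℕ) (h : ℝ) :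
    quinticIntegral i (n + 2) h = 2 * h * quinticIntegral i n h +
      1 / 2 * quinticIntegral (i + 4) n h - 2 / 5 * quinticIntegral (i + 5) n h := by
  have integrable j := intervalIntegrable_pow_mul_upperBranch_quintic 0 (5 / 4) j n h
  simp only [quinticIntegral]
  rw [← intervalIntegral.integral_const_mul, ← intervalIntegral.integral_const_mul,
    ← intervalIntegral.integral_const_mul,
    ← intervalIntegral.integral_add ((integrable _).const_mul _) ((integrable _).const_mul _),
    ← intervalIntegral.integral_sub (((integrable _).const_mul _).add ((integrable _).const_mul _))
      ((integrable _).const_mul _)]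
  refine intervalIntegral.integral_congr fun x _ => ?_
  simp only [upperBranch_pow_add_two hn, quinticPotential]
  ring

theorem quinticIntegral_add_four (hn : n ≠ 0) (hh : h ≤ 0) (i : ℕ) :
    (n + 2) * quinticIntegral (i + 4) n h = (n + 2) * quinticIntegral 3 n h +
      ∑ j ∈ Finset.range i, (j + 1) * quinticIntegral j (n + 2) h := by
  induction i with
  | zero =>
    have parts := quinticIntegral_by_parts hn hh 0
    rw [Finset.sum_range_zero]
    push_cast at parts
    linear_combination -parts
  | succ i ih =>
    have parts := quinticIntegral_by_parts hn hh (i + 1)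
    push_cast [Nat.add_sub_cancel] at parts
    rw [Finset.sum_range_succ]
    linear_combination ih - parts

theorem quinticIntegral_recurrence (hn : n ≠ 0) (hh : h ≤ 0) (i : ℕ) :
    (10 * n + 4 * i + 24) * quinticIntegral i (n + 2) h =
      (n + 2) * (20 * h * quinticIntegral i n h + quinticIntegral 3 n h) +
        ∑ j ∈ Finset.range i, (j + 1) * quinticIntegral j (n + 2) h := by
  have energy := quinticIntegral_exponent_add_two hn i h
  have shift := quinticIntegral_add_four hn hh i
  have parts := quinticIntegral_by_parts hn hh (i + 1)
  push_cast [Nat.add_sub_cancel] at parts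
  linear_combination 10 * (n + 2 : ℝ) * energy + shift + 4 * parts

theorem differentiableAt_quinticIntegral_three (hn : n ≠ 0) (hh : h < 0)
    (hc : 20 * h + 1 ≠ 0) : DifferentiableAt ℝ (quinticIntegral 3 n) h := by
  have higher j := (hasDerivAt_quinticIntegral_exponent_add_two hn j h).differentiableAt
  have hden : (n + 2) * (20 * h + 1) ≠ 0 := mul_ne_zero (by positivity) hc
  have quotient : DifferentiableAt ℝ (fun t =>
      ((10 * n + 36) * quinticIntegral 3 (n + 2) t -
        ∑ j ∈ Finset.range 3, (j + 1) * quinticIntegral j (n + 2) t) /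
          ((n + 2) * (20 * t + 1))) h := by
    fun_prop (disch := assumption)
  have hcont : ContinuousAt (fun t : ℝ => 20 * t + 1) h := by fun_prop
  refine quotient.congr_of_eventuallyEq ?_
  filter_upwards [Iio_mem_nhds hh, hcont.eventually_ne hc] with t ht htc
  have := quinticIntegral_recurrence hn (le_of_lt ht) 3
  rw [eq_div_iff (mul_ne_zero (by positivity) htc)]
  linear_combination -this

theorem differentiableAt_quinticIntegral (hn : n ≠ 0) (hh : h < 0) (hc : 20 * h + 1 ≠ 0)
    (i : ℕ) : DifferentiableAt ℝ (quinticIntegral i n) h := by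
  have higher j := (hasDerivAt_quinticIntegral_exponent_add_two hn j h).differentiableAt
  have three := differentiableAt_quinticIntegral_three hn hh hc
  have hden : (n + 2) * (20 * h) ≠ 0 := mul_ne_zero (by positivity) (by linarith)
  have quotient : DifferentiableAt ℝ (fun t =>
      ((10 * n + 4 * i + 24) * quinticIntegral i (n + 2) t - (n + 2) * quinticIntegral 3 n t -
        ∑ j ∈ Finset.range i, (j + 1) * quinticIntegral j (n + 2) t) /
          ((n + 2) * (20 * t))) h := by
    fun_prop (disch := assumption)
  refine quotient.congr_of_eventuallyEq ?_
  filter_upwards [Iio_mem_nhds hh] with t ht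
  have := quinticIntegral_recurrence hn (le_of_lt ht) i
  rw [eq_div_iff (mul_ne_zero (by positivity) (mul_ne_zero (by norm_num) (ne_of_lt ht)))]
  linear_combination -this

theorem quinticIntegral_deriv_relation (hn : n ≠ 0) (hh : h < 0) (hc : 20 * h + 1 ≠ 0) (i : ℕ) :
    20 * h * deriv (quinticIntegral i n) h + deriv (quinticIntegral 3 n) h =
      (10 * n + 4 * i + 4) * quinticIntegral i n h -
        ∑ j ∈ Finset.range i, (j + 1) * quinticIntegral j n h := by
  have derivative j := (differentiableAt_quinticIntegral hn hh hc j).hasDerivAt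
  have higher j := hasDerivAt_quinticIntegral_exponent_add_two hn j h
  have lhs := (higher i).const_mul (10 * n + 4 * i + 24 : ℝ)
  have rhs := ((((hasDerivAt_id h).const_mul 20).mul (derivative i)).add
    (derivative 3)).const_mul (n + 2 : ℝ) |>.add
      (HasDerivAt.fun_sum fun j (_ : j ∈ Finset.range i) => (higher j).const_mul (j + 1 : ℝ))
  have eq := lhs.unique (rhs.congr_of_eventuallyEq <| by
    filter_upwards [Iio_mem_nhds hh] with t ht
    exact quinticIntegral_recurrence hn (le_of_lt ht) i)
  simp only [mul_left_comm _ (n + 2 : ℝ), ← Finset.mul_sum, ← mul_add] at eq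
  have := mul_left_cancel₀ (by positivity : (n + 2 : ℝ) ≠ 0) eq
  simp only [id] at this
  linear_combination -this

theorem quinticIntegral_picardFuchs (hn : n ≠ 0) (hh : h < 0) (hc : 20 * h + 1 ≠ 0) (i : ℕ) :
    20 * h * (20 * h + 1) * deriv (quinticIntegral i n) h =
      (20 * h + 1) * ((10 * n + 4 * i + 4) * quinticIntegral i n h -
          ∑ j ∈ Finset.range i, (j + 1) * quinticIntegral j n h) -
        ((10 * n + 16) * quinticIntegral 3 n h -
          ∑ j ∈ Finset.range 3, (j + 1) * quinticIntegral j n h) := by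
  have relation := quinticIntegral_deriv_relation hn hh hc i
  have relation_three := quinticIntegral_deriv_relation hn hh hc 3
  push_cast at relation_three
  linear_combination (20 * h + 1) * relation - relation_three

theorem quinticIntegral_picardFuchs_mulVec (hh : h < 0) (hc : 20 * h + 1 ≠ 0) :
    (20 * h * (20 * h + 1)) • (fun i : Fin 4 => deriv (quinticIntegral i 1) h) =
      ((!![15, 2, 3, -26; 0, 20, 3, -26; 0, 0, 25, -26; 0, 0, 0, 0] : Matrix (Fin 4) (Fin 4) ℝ) +
        h • !![280, 0, 0, 0; -20, 360, 0, 0; -20, -40, 440, 0; -20, -40, -60, 520]).mulVec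
          fun i : Fin 4 => quinticIntegral i 1 h := by
  ext i
  simp only [Matrix.mulVec, dotProduct, Pi.smul_apply, smul_eq_mul,
    quinticIntegral_picardFuchs one_ne_zero hh hc]
  fin_cases i <;>
    simp only [Fin.sum_univ_four, Finset.sum_range_succ, Finset.sum_range_zero, Fin.reduceFinMk,
      Fin.zero_eta, Fin.mk_one, Fin.isValue, Fin.coe_ofNat_eq_mod, Nat.reduceMod,
      Matrix.add_apply, Matrix.smul_apply, Matrix.of_apply, Matrix.cons_val', Matrix.cons_val,
      smul_eq_mul, Nat.cast_ofNat, Nat.cast_one, Nat.cast_zero] <;>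
    ring

end QuinticIntegral

/-- For the quintic Hamiltonian `H(x,y) = y²/2 + F(x)` with `F(x) = −x⁴/4 + x⁵/5`, the
vector `X(h) = (I_{0,1}(h), I_{1,1}(h), I_{2,1}(h), I_{3,1}(h))ᵀ` is differentiable on
`(−1/20, 0)` and satisfies the Picard–Fuchs system
`20h(20h+1)·X′(h) = (A₀ + A₁h)·X(h)`. -/
theorem quintic_picard_fuchs_system
    (F : ℝ → ℝ) (hF : ∀ x, F x = -x ^ 4 / 4 + x ^ 5 / 5)
    (x₁ x₂ : ℝ → ℝ)
    (hx₁d : ∀ h ∈ Set.Ioo (-1/20 : ℝ) 0, DifferentiableAt ℝ x₁ h)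
    (hx₂d : ∀ h ∈ Set.Ioo (-1/20 : ℝ) 0, DifferentiableAt ℝ x₂ h)
    (hx : ∀ h ∈ Set.Ioo (-1/20 : ℝ) 0,
      0 < x₁ h ∧ x₁ h < 1 ∧ 1 < x₂ h ∧ x₂ h < 5/4)
    (hF₁ : ∀ h ∈ Set.Ioo (-1/20 : ℝ) 0, F (x₁ h) = h)
    (hF₂ : ∀ h ∈ Set.Ioo (-1/20 : ℝ) 0, F (x₂ h) = h)
    (hbelow : ∀ h ∈ Set.Ioo (-1/20 : ℝ) 0, ∀ x ∈ Set.Ioo (x₁ h) (x₂ h), F x < h)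
    (X : ℝ → Fin 4 → ℝ)
    (hX : ∀ h i, X h i = 2 * ∫ x in x₁ h..x₂ h, x ^ (i : ℕ) * Real.sqrt (2 * (h - F x)))
    (A₀ A₁ : Matrix (Fin 4) (Fin 4) ℝ)
    (hA₀ : A₀ = !![15, 2, 3, -26; 0, 20, 3, -26; 0, 0, 25, -26; 0, 0, 0, 0])
    (hA₁ : A₁ = !![280, 0, 0, 0; -20, 360, 0, 0; -20, -40, 440, 0; -20, -40, -60, 520]) :
    ∃ X' : ℝ → Fin 4 → ℝ, ∀ h ∈ Set.Ioo (-1/20 : ℝ) 0,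
      HasDerivAt X (X' h) h ∧
      (20 * h * (20 * h + 1)) • X' h = (A₀ + h • A₁).mulVec (X h) := by
  obtain rfl : F = quinticPotential := funext hF
  have eq_quinticIntegral : ∀ h ∈ Ioo (-1 / 20 : ℝ) 0,
      X h = (2 : ℝ) • fun i : Fin 4 => quinticIntegral i 1 h := by
    intro h hh
    obtain ⟨x₁_pos, x₁_lt, lt_x₂, x₂_lt⟩ := hx h hh
    ext i
    rw [hX, Pi.smul_apply, ← integral_oval_eq_quinticIntegral ⟨x₁_pos.le, x₁_lt.le⟩
      ⟨lt_x₂.le, x₂_lt.le⟩ (hF₁ h hh) (hF₂ h hh) one_ne_zero]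
    simp only [upperBranch, pow_one, smul_eq_mul]
  refine ⟨fun h => (2 : ℝ) • fun i : Fin 4 => deriv (quinticIntegral i 1) h, fun h hh => ?_⟩
  have hc : 20 * h + 1 ≠ 0 := by linarith [hh.1]
  constructor
  · have derivative := hasDerivAt_pi.2 fun i : Fin 4 =>
      (differentiableAt_quinticIntegral one_ne_zero hh.2 hc i).hasDerivAt
    refine (derivative.const_smul (2 : ℝ)).congr_of_eventuallyEq ?_
    filter_upwards [isOpen_Ioo.mem_nhds hh] using eq_quinticIntegral
  · rw [eq_quinticIntegral h hh, Matrix.mulVec_smul, smul_comm, hA₀, hA₁,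
      quinticIntegral_picardFuchs_mulVec hh.2 hc]
end
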